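/- arXiv:1703.01066 — 5 statements merged into one kernel-verified Lean document; each statement's English description precedes it below -/
import Mathlib

section
/- Fix R₁, R₂ with 0 < R₁ < R₂ < 1 and let ρ(t) = sinh(t)·e^{−t} for t ≥ 0. Define f(t) = exp(−R₁²/(2ρ(t))) − exp(−R₂²/(2ρ(t))) for t > 0. Then f(t) > 0 for every t > 0, f(t) → 0 as t → 0⁺, and there exists t* > 0 such that f is monotone decreasing (antitone) on [t*, ∞). -/
open Real Filter Set

lemma aux_mono (a b : ℝ) (ha : 0 < a) (hab : a < b) :
    MonotoneOn (fun s : ℝ => Real.exp (-a * s) - Real.exp (-b * s)) (Set.Iic (1 / b)) := by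
  have hb : 0 < b := ha.trans hab
  have hd : ∀ s : ℝ, HasDerivAt (fun s : ℝ => Real.exp (-a * s) - Real.exp (-b * s))
      (Real.exp (-a * s) * (-a * 1) - Real.exp (-b * s) * (-b * 1)) s := fun s =>
    (((hasDerivAt_id s).const_mul (-a)).exp).sub (((hasDerivAt_id s).const_mul (-b)).exp)
  apply monotoneOn_of_deriv_nonneg (convex_Iic _)
  · exact fun s _ => (hd s).continuousAt.continuousWithinAt
  · exact fun s _ => (hd s).differentiableAt.differentiableWithinAt
  · intro s hs
    rw [(hd s).deriv]
    have hs' : s ≤ 1 / b := mem_Iic.1 (interior_subset hs)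
    have h1 : s * b ≤ 1 := by rwa [le_div_iff₀ hb] at hs'
    have h2 : -b * s = -a * s + -(b - a) * s := by ring
    have h3 := Real.add_one_le_exp (-(b - a) * s)
    rw [h2, Real.exp_add]
    have h4 : a ≤ b * Real.exp (-(b - a) * s) := by
      nlinarith [mul_le_mul_of_nonneg_left h3 hb.le]
    nlinarith [Real.exp_pos (-a * s)]

theorem stmt_1 (R₁ R₂ : ℝ) (hR₁ : 0 < R₁) (hR₁₂ : R₁ < R₂) (hR₂ : R₂ < 1)
    (ρ f : ℝ → ℝ)
    (hρ : ∀ t, ρ t = Real.sinh t * Real.exp (-t))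
    (hf : ∀ t, f t = Real.exp (-R₁ ^ 2 / (2 * ρ t)) - Real.exp (-R₂ ^ 2 / (2 * ρ t))) :
    (∀ t : ℝ, 0 < t → 0 < f t) ∧
    Tendsto f (nhdsWithin 0 (Set.Ioi 0)) (nhds 0) ∧
    ∃ tstar : ℝ, 0 < tstar ∧ AntitoneOn f (Set.Ici tstar) := by
  have hR2 : 0 < R₂ := hR₁.trans hR₁₂
  have hsq : R₁ ^ 2 < R₂ ^ 2 := by nlinarith
  have hb0 : 0 < R₂ ^ 2 := by positivity
  have ha0 : 0 < R₁ ^ 2 := by positivity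
  have hb1 : R₂ ^ 2 < 1 := by nlinarith
  have hρ2 : ∀ t, 2 * ρ t = 1 - Real.exp (-(2 * t)) := by
    intro t
    have e1 : Real.exp t * Real.exp (-t) = 1 := by rw [← Real.exp_add]; simp
    have e2 : Real.exp (-(2 * t)) = Real.exp (-t) * Real.exp (-t) := by
      rw [← Real.exp_add]; congr 1; ring
    rw [hρ, Real.sinh_eq, e2]
    linear_combination e1
  have hpos : ∀ t, 0 < t → 0 < 2 * ρ t := by
    intro t ht
    rw [hρ2]
    have : Real.exp (-(2 * t)) < 1 := by
      rw [← Real.exp_zero]; exact Real.exp_lt_exp.2 (by linarith)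
    linarith
  refine ⟨?_, ?_, ?_⟩
  · intro t ht
    rw [hf, sub_pos, Real.exp_lt_exp]
    exact div_lt_div_of_pos_right (by linarith) (hpos t ht)
  · have h0 : Tendsto (fun t => 2 * ρ t) (nhdsWithin 0 (Set.Ioi 0))
        (nhdsWithin 0 (Set.Ioi 0)) := by
      apply tendsto_nhdsWithin_iff.2 ⟨?_, ?_⟩
      · have : Continuous (fun t => 2 * ρ t) := by
          simp only [hρ2]; fun_prop
        have h := this.tendsto 0
        have hz : 2 * ρ 0 = 0 := by rw [hρ2]; simp
        rw [hz] at h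
        exact h.mono_left nhdsWithin_le_nhds
      · filter_upwards [self_mem_nhdsWithin] with t ht using hpos t ht
    have key : ∀ c : ℝ, 0 < c → Tendsto (fun t => Real.exp (-c / (2 * ρ t)))
        (nhdsWithin 0 (Set.Ioi 0)) (nhds 0) := by
      intro c hc
      apply Real.tendsto_exp_atBot.comp
      simp only [div_eq_mul_inv]
      exact (tendsto_inv_nhdsGT_zero.comp h0).const_mul_atTop_of_neg (by linarith)
    have := (key _ ha0).sub (key _ hb0)
    rw [sub_zero] at this
    exact this.congr (fun t => (hf t).symm)
  · have hlog : Real.log (1 - R₂ ^ 2) < 0 := Real.log_neg (by linarith) (by linarith)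
    refine ⟨-Real.log (1 - R₂ ^ 2) / 2, by linarith, ?_⟩
    have hge : ∀ t, -Real.log (1 - R₂ ^ 2) / 2 ≤ t → R₂ ^ 2 ≤ 2 * ρ t := by
      intro t ht
      have : Real.exp (-(2 * t)) ≤ 1 - R₂ ^ 2 :=
        (Real.le_log_iff_exp_le (by linarith)).1 (by linarith)
      rw [hρ2]; linarith
    intro x hx y hy hxy
    have hx' := hge x hx
    have hy' := hge y hy
    have hle : 2 * ρ x ≤ 2 * ρ y := by
      rw [hρ2, hρ2]
      have : Real.exp (-(2 * y)) ≤ Real.exp (-(2 * x)) := Real.exp_le_exp.2 (by linarith)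
      linarith
    have := aux_mono (R₁ ^ 2) (R₂ ^ 2) ha0 hsq
      (show 1 / (2 * ρ y) ∈ Set.Iic (1 / R₂ ^ 2) from one_div_le_one_div_of_le hb0 hy')
      (show 1 / (2 * ρ x) ∈ Set.Iic (1 / R₂ ^ 2) from one_div_le_one_div_of_le hb0 hx')
      (one_div_le_one_div_of_le (by linarith) hle)
    rw [hf, hf]
    simpa only [mul_one_div] using this
end

section
/- Fix R₁, R₂ with 1 ≤ R₁ < R₂ and let ρ(t) = sinh(t)·e^{−t} for t ≥ 0. Define f(t) = exp(−R₁²/(2ρ(t))) − exp(−R₂²/(2ρ(t))) for t > 0. Then f(t) → 0 as t → 0⁺ and f is strictly monotone increasing on (0, ∞). -/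
open Real Filter Set

lemma aux_anti (a b : ℝ) (ha : 1 ≤ a) (hab : a < b) :
    StrictAntiOn (fun u : ℝ => Real.exp (-a * u) - Real.exp (-b * u)) (Set.Ici 1) := by
  apply strictAntiOn_of_deriv_neg (convex_Ici 1)
  · fun_prop
  · intro u hu
    rw [interior_Ici] at hu
    have hu1 : 1 < u := hu
    have h1 : ∀ c : ℝ, HasDerivAt (fun u : ℝ => Real.exp (-c * u)) (Real.exp (-c * u) * (-c)) u := by
      intro c
      have := ((hasDerivAt_id u).const_mul (-c)).exp
      simpa using this
    have h2 := ((h1 a).sub (h1 b)).deriv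
    have h3 : deriv (fun u : ℝ => Real.exp (-a * u) - Real.exp (-b * u)) u
      = Real.exp (-a * u) * (-a) - Real.exp (-b * u) * (-b) := h2
    rw [h3]
    have h4 : Real.exp (-a * u) = Real.exp (-b * u) * Real.exp ((b - a) * u) := by
      rw [← Real.exp_add]; congr 1; ring
    have h5 := Real.add_one_le_exp ((b - a) * u)
    have h6 : b < a * Real.exp ((b - a) * u) := by
      have : (b - a) * 1 < (b - a) * u := mul_lt_mul_of_pos_left hu1 (by linarith)
      have h7 : a * (b - a + 1) < a * Real.exp ((b - a) * u) :=
        mul_lt_mul_of_pos_left (by linarith) (by linarith)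
      nlinarith
    rw [h4]
    have := mul_lt_mul_of_pos_left h6 (Real.exp_pos (-b * u))
    linarith

theorem stmt_2 (R₁ R₂ : ℝ) (hR₁ : 1 ≤ R₁) (hR₁₂ : R₁ < R₂)
    (ρ f : ℝ → ℝ)
    (hρ : ∀ t, ρ t = Real.sinh t * Real.exp (-t))
    (hf : ∀ t, f t = Real.exp (-R₁ ^ 2 / (2 * ρ t)) - Real.exp (-R₂ ^ 2 / (2 * ρ t))) :
    Tendsto f (nhdsWithin 0 (Set.Ioi 0)) (nhds 0) ∧
    StrictMonoOn f (Set.Ioi 0) := by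
  have hr : ∀ t, 2 * ρ t = 1 - Real.exp (-2 * t) := by
    intro t
    have h1 : Real.exp t * Real.exp (-t) = 1 := by rw [← Real.exp_add]; simp
    have h2 : Real.exp (-2 * t) = Real.exp (-t) * Real.exp (-t) := by
      rw [← Real.exp_add]; congr 1; ring
    rw [hρ, Real.sinh_eq, h2]
    linear_combination h1
  have hf' : f = fun t => Real.exp (-(R₁ ^ 2) * (1 - Real.exp (-2 * t))⁻¹)
      - Real.exp (-(R₂ ^ 2) * (1 - Real.exp (-2 * t))⁻¹) := by
    funext t
    rw [hf, hr, div_eq_mul_inv, div_eq_mul_inv]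
  have hpos : ∀ t : ℝ, 0 < t → 0 < 1 - Real.exp (-2 * t) := by
    intro t ht
    have : Real.exp (-2 * t) < 1 := by rw [← Real.exp_zero]; exact Real.exp_lt_exp.2 (by linarith)
    linarith
  have ha : 1 ≤ R₁ ^ 2 := by nlinarith
  have hab : R₁ ^ 2 < R₂ ^ 2 := by nlinarith
  constructor
  · have h0 : Tendsto (fun t : ℝ => 1 - Real.exp (-2 * t)) (nhdsWithin 0 (Set.Ioi 0))
        (nhdsWithin 0 (Set.Ioi 0)) := by
      apply tendsto_nhdsWithin_of_tendsto_nhds_of_eventually_within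
      · have : Continuous (fun t : ℝ => 1 - Real.exp (-2 * t)) := by fun_prop
        have h := this.tendsto 0
        simp only [mul_zero, Real.exp_zero, sub_self] at h
        exact h.mono_left nhdsWithin_le_nhds
      · filter_upwards [self_mem_nhdsWithin] with t ht
        exact hpos t ht
    have h1 := tendsto_inv_nhdsGT_zero.comp h0
    have h2 : ∀ c : ℝ, 0 < c → Tendsto (fun t : ℝ => Real.exp (-c * (1 - Real.exp (-2 * t))⁻¹))
        (nhdsWithin 0 (Set.Ioi 0)) (nhds 0) := by
      intro c hc
      exact Real.tendsto_exp_atBot.comp (h1.const_mul_atTop_of_neg (by linarith))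
    rw [hf']
    simpa using (h2 (R₁ ^ 2) (by linarith)).sub (h2 (R₂ ^ 2) (by linarith))
  · intro s hs t ht hst
    rw [hf']
    have hs' := hpos s hs
    have ht' := hpos t ht
    have hlt : Real.exp (-2 * t) < Real.exp (-2 * s) := Real.exp_lt_exp.2 (by linarith)
    have key : ∀ x : ℝ, 0 < 1 - Real.exp (-2 * x) → (1 - Real.exp (-2 * x))⁻¹ ∈ Set.Ici (1:ℝ) := by
      intro x hx
      exact (one_le_inv₀ hx).2 (by linarith [Real.exp_pos (-2 * x)])
    exact aux_anti _ _ ha hab (key t ht') (key s hs')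
      ((inv_lt_inv₀ ht' hs').2 (by linarith))
end

section
/- Fix T > 0 and R₂ > 0, and let ρ(t) = sinh(t)·sinh(T−t)/sinh(T) for t ∈ (0, T). Then the function P(t) = 1 − exp(−R₂²/(2ρ(t))) is monotone decreasing on (0, T/2] and monotone increasing on [T/2, T), P(t) → 1 as t → 0⁺ and as t → T⁻, and P attains its minimum over (0, T) at t = T/2, with value 1 − exp(−R₂²·sinh(T)/(2·sinh(T/2)²)). -/
open Real Filter Set

theorem stmt_3 (T R₂ : ℝ) (hT : 0 < T) (hR₂ : 0 < R₂)
    (ρ P : ℝ → ℝ)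
    (hρ : ∀ t, ρ t = Real.sinh t * Real.sinh (T - t) / Real.sinh T)
    (hP : ∀ t, P t = 1 - Real.exp (-R₂ ^ 2 / (2 * ρ t))) :
    AntitoneOn P (Set.Ioc 0 (T / 2)) ∧
    MonotoneOn P (Set.Ico (T / 2) T) ∧
    Tendsto P (nhdsWithin 0 (Set.Ioi 0)) (nhds 1) ∧
    Tendsto P (nhdsWithin T (Set.Iio T)) (nhds 1) ∧
    (∀ t ∈ Set.Ioo 0 T, P (T / 2) ≤ P t) ∧
    P (T / 2) = 1 - Real.exp (-R₂ ^ 2 * Real.sinh T / (2 * Real.sinh (T / 2) ^ 2)) := by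
  have hsT : 0 < Real.sinh T := Real.sinh_pos_iff.2 hT
  have hpos : ∀ t, 0 < t → t < T → 0 < ρ t := by
    intro t h0 h1
    rw [hρ]
    have h2 : 0 < Real.sinh t := Real.sinh_pos_iff.2 h0
    have h3 : 0 < Real.sinh (T - t) := Real.sinh_pos_iff.2 (by linarith)
    positivity
  have hform : ∀ t, ρ t = (Real.cosh T - Real.cosh (T - 2 * t)) / (2 * Real.sinh T) := by
    intro t
    rw [hρ]
    have e1 : Real.cosh T = Real.cosh (t + (T - t)) := by congr 1; ring
    have e2 : Real.cosh (T - 2 * t) = Real.cosh ((T - t) - t) := by congr 1; ring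
    rw [e1, e2, Real.cosh_add t (T - t), Real.cosh_sub (T - t) t]
    field_simp
    ring
  have key : ∀ s t, 0 < s → s < T → 0 < t → t < T → |T - 2 * t| ≤ |T - 2 * s| → P t ≤ P s := by
    intro s t hs0 hs1 ht0 ht1 h
    have hc := Real.cosh_le_cosh.2 h
    have hle : ρ s ≤ ρ t := by
      rw [hform, hform]
      gcongr
    have hps := hpos s hs0 hs1
    rw [hP, hP]
    have : R₂ ^ 2 / (2 * ρ t) ≤ R₂ ^ 2 / (2 * ρ s) := by gcongr
    have h2 : Real.exp (-R₂ ^ 2 / (2 * ρ s)) ≤ Real.exp (-R₂ ^ 2 / (2 * ρ t)) := by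
      apply Real.exp_le_exp.2
      rw [neg_div, neg_div]
      linarith
    linarith
  have hsymm : ∀ t, P (T - t) = P t := by
    intro t
    rw [hP, hP, hρ, hρ, sub_sub_cancel, mul_comm (Real.sinh (T - t))]
  have hlim0 : Tendsto P (nhdsWithin 0 (Set.Ioi 0)) (nhds 1) := by
    have hρ0 : Tendsto (fun t => 2 * ρ t) (nhdsWithin 0 (Set.Ioi 0)) (nhdsWithin 0 (Set.Ioi 0)) := by
      apply tendsto_nhdsWithin_iff.2
      constructor
      · have hc : Continuous (fun t => 2 * ρ t) := by
          simp only [hρ]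
          fun_prop
        have := (hc.tendsto 0).mono_left (nhdsWithin_le_nhds (s := Set.Ioi 0))
        simpa [hρ] using this
      · filter_upwards [Ioo_mem_nhdsGT hT] with t ht
        have := hpos t ht.1 ht.2
        simp only [Set.mem_Ioi]
        positivity
    have h1 := (tendsto_inv_nhdsGT_zero.comp hρ0).const_mul_atTop (show 0 < R₂ ^ 2 by positivity)
    have h2 := (Real.tendsto_exp_neg_atTop_nhds_zero.comp h1).const_sub 1
    rw [sub_zero] at h2
    refine h2.congr ?_
    intro t
    simp [hP, div_eq_mul_inv]
  refine ⟨?_, ?_, hlim0, ?_, ?_, ?_⟩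
  · intro s hs t ht hst
    have := hs.1; have := hs.2; have := ht.2
    apply key s t <;> try linarith
    rw [abs_of_nonneg (by linarith), abs_of_nonneg (by linarith)]
    linarith
  · intro s hs t ht hst
    have := hs.1; have := hs.2; have := ht.2
    apply key t s <;> try linarith
    rw [abs_of_nonpos (by linarith), abs_of_nonpos (by linarith)]
    linarith
  · have hm : Tendsto (fun t => T - t) (nhdsWithin T (Set.Iio T)) (nhdsWithin 0 (Set.Ioi 0)) := by
      apply tendsto_nhdsWithin_iff.2
      constructor
      · have hc : Continuous (fun t => T - t) := by fun_prop
        have := (hc.tendsto T).mono_left (nhdsWithin_le_nhds (s := Set.Iio T))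
        simpa using this
      · filter_upwards [self_mem_nhdsWithin] with t ht
        simpa using ht
    exact (hlim0.comp hm).congr hsymm
  · intro t ht
    apply key t (T / 2) ht.1 ht.2 (by linarith) (by linarith)
    have : T - 2 * (T / 2) = 0 := by ring
    rw [this, abs_zero]
    positivity
  · have hh : 0 < Real.sinh (T / 2) := Real.sinh_pos_iff.2 (by linarith)
    rw [hP, hρ, show T - T / 2 = T / 2 by ring]
    congr 2
    field_simp
end

section
/- Let d ≥ 1, T > 0, 0 < t ≤ T, x ∈ ℝ^d, and set N = exp(dT/4). Then [N·(2π·sinh(t))^{−d/2}·exp(−coth(t)·|x|²/2)] · [N·exp(−(|x|² + d(T−t))/2)] = (2π·ρ(t))^{−d/2}·exp(−|x|²/(2ρ(t))), where ρ(t) = sinh(t)·e^{−t}. -/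
open Real

theorem stmt_12 (d : ℕ) (hd : 1 ≤ d) (T t : ℝ) (hT : 0 < T) (ht : 0 < t) (htT : t ≤ T)
    (x : EuclideanSpace ℝ (Fin d))
    (N : ℝ) (hN : N = Real.exp ((d : ℝ) * T / 4))
    (ρ : ℝ → ℝ) (hρ : ∀ s, ρ s = Real.sinh s * Real.exp (-s)) :
    (N * (2 * Real.pi * Real.sinh t) ^ (-(d : ℝ) / 2) *
        Real.exp (-(Real.cosh t / Real.sinh t) * ‖x‖ ^ 2 / 2)) *
      (N * Real.exp (-(‖x‖ ^ 2 + (d : ℝ) * (T - t)) / 2)) =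
    (2 * Real.pi * ρ t) ^ (-(d : ℝ) / 2) * Real.exp (-‖x‖ ^ 2 / (2 * ρ t)) := by
  have hs : 0 < Real.sinh t := Real.sinh_pos_iff.2 ht
  have hpi := Real.pi_pos
  have h1 : (2 * Real.pi * ρ t) ^ (-(d : ℝ) / 2)
      = (2 * Real.pi * Real.sinh t) ^ (-(d : ℝ) / 2) * Real.exp ((d : ℝ) * t / 2) := by
    rw [hρ, ← mul_assoc, Real.mul_rpow (by positivity) (Real.exp_pos _).le, ← Real.exp_mul]
    congr 2
    ring
  have h2 : -‖x‖ ^ 2 / (2 * ρ t)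
      = -(Real.cosh t / Real.sinh t) * ‖x‖ ^ 2 / 2 - ‖x‖ ^ 2 / 2 := by
    have e : -‖x‖ ^ 2 / (2 * ρ t) = -‖x‖ ^ 2 * Real.exp t / (2 * Real.sinh t) := by
      rw [hρ, Real.exp_neg]
      have := Real.exp_pos t
      field_simp
    rw [e, ← Real.cosh_add_sinh]
    field_simp
    ring
  have h3 : Real.exp ((d : ℝ) * T / 4) * Real.exp ((d : ℝ) * T / 4) *
      (Real.exp (-(Real.cosh t / Real.sinh t) * ‖x‖ ^ 2 / 2) *
      Real.exp (-(‖x‖ ^ 2 + (d : ℝ) * (T - t)) / 2)) =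
      Real.exp ((d : ℝ) * t / 2) * Real.exp (-‖x‖ ^ 2 / (2 * ρ t)) := by
    rw [h2, ← Real.exp_add, ← Real.exp_add, ← Real.exp_add, ← Real.exp_add]
    congr 1
    ring
  rw [← hN] at h3
  rw [h1]
  linear_combination (2 * Real.pi * Real.sinh t) ^ (-(d : ℝ) / 2) * h3
end

section
/- Let d ≥ 1, M > 0, and let a, b : ℕ^d → ℝ be families with |a_n| ≤ M and |b_n| ≤ M for all n ∈ ℕ^d, and with a₀ > 0 and b₀ > 0 (where 0 denotes the zero multi-index). For n ∈ ℕ^d set E_n = n₁ + ⋯ + n_d + d/2, and for T > 0 let 𝒩² = e^{T·d/2}/(a₀·b₀), so that 𝒩 = (a₀·b₀)^{−1/2}·e^{T·E₀/2} is the unique positive solution of 𝒩²·a₀·e^{−T·E₀}·b₀ = 1. Then for every T > 0 the family (a_n·e^{−T·E_n}·b_n)_{n ∈ ℕ^d} is summable and |𝒩²·∑_{n ∈ ℕ^d, n ≠ 0} a_n·e^{−T·E_n}·b_n| ≤ (M²/(a₀·b₀))·d·e^{−T}·(1 − e^{−T})^{−d}; consequently 𝒩²·∑_{n ∈ ℕ^d}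 a_n·e^{−T·E_n}·b_n = 1 + O(e^{−T}) as T → +∞. -/
open Real Filter Asymptotics

theorem aux_geom (r : ℝ) (h0 : 0 ≤ r) (h1 : r < 1) (d : ℕ) :
    HasSum (fun n : Fin d → ℕ => ∏ j, r ^ (n j)) (((1 - r)⁻¹) ^ d) := by
  induction d with
  | zero =>
    simp
  | succ d ih =>
    have hg := hasSum_geometric_of_lt_one h0 h1
    have hs : Summable (fun x : ℕ × (Fin d → ℕ) => r ^ x.1 * ∏ j, r ^ (x.2 j)) :=
      Summable.mul_of_nonneg (f := fun n : ℕ => r ^ n)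
        (g := fun n : Fin d → ℕ => ∏ j, r ^ (n j)) hg.summable ih.summable
        (Pi.le_def.2 fun n => pow_nonneg h0 n)
        (Pi.le_def.2 fun n => Finset.prod_nonneg fun j _ => pow_nonneg h0 _)
    have h := hg.mul ih hs
    rw [pow_succ']
    rw [← (Fin.consEquiv (fun _ : Fin (d+1) => ℕ)).hasSum_iff]
    have e : ((fun n : Fin (d+1) → ℕ => ∏ j, r ^ (n j)) ∘ (Fin.consEquiv (fun _ : Fin (d+1) => ℕ)))
        = fun x : ℕ × (Fin d → ℕ) => r ^ x.1 * ∏ j, r ^ (x.2 j) := by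
      funext x
      simp [Fin.consEquiv, Fin.prod_univ_succ]
    rw [e]
    exact h

theorem aux_compl {d : ℕ} (f : (Fin d → ℕ) → ℝ) (S : ℝ) (h : HasSum f S) :
    HasSum (fun n : {n : Fin d → ℕ // n ≠ 0} => f n.1) (S - f 0) := by
  have h1 : HasSum (f ∘ (fun x : ({0} : Set (Fin d → ℕ)) => (x : Fin d → ℕ))) (f 0) := by
    have := hasSum_unique (f ∘ (fun x : ({0} : Set (Fin d → ℕ)) => (x : Fin d → ℕ)))
    simpa using this
  have h2 := (h1.hasSum_compl_iff (a₂ := S - f 0)).2 (by simpa using h)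
  exact h2

theorem stmt_17 (d : ℕ) (hd : 1 ≤ d) (M : ℝ) (hM : 0 < M)
    (a b : (Fin d → ℕ) → ℝ)
    (ha : ∀ n, |a n| ≤ M) (hb : ∀ n, |b n| ≤ M)
    (ha0 : 0 < a 0) (hb0 : 0 < b 0)
    (E : (Fin d → ℕ) → ℝ)
    (hE : ∀ n, E n = (∑ j, (n j : ℝ)) + (d : ℝ) / 2)
    (𝒩 : ℝ → ℝ)
    (h𝒩 : ∀ T, 𝒩 T = (a 0 * b 0) ^ (-(1 : ℝ) / 2) * Real.exp (T * E 0 / 2)) :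
    (∀ T : ℝ, 0 < T →
      (𝒩 T) ^ 2 = Real.exp (T * (d : ℝ) / 2) / (a 0 * b 0) ∧
      0 < 𝒩 T ∧
      (𝒩 T) ^ 2 * (a 0 * Real.exp (-T * E 0) * b 0) = 1 ∧
      (∀ N : ℝ, 0 < N → N ^ 2 * (a 0 * Real.exp (-T * E 0) * b 0) = 1 → N = 𝒩 T) ∧
      Summable (fun n : Fin d → ℕ => a n * Real.exp (-T * E n) * b n) ∧
      |(𝒩 T) ^ 2 * ∑' n : {n : Fin d → ℕ // n ≠ 0},
          a n.1 * Real.exp (-T * E n.1) * b n.1| ≤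
        M ^ 2 / (a 0 * b 0) *
          ((d : ℝ) * Real.exp (-T) * (1 - Real.exp (-T)) ^ (-(d : ℤ)))) ∧
    (fun T : ℝ =>
        (𝒩 T) ^ 2 * (∑' n : Fin d → ℕ, a n * Real.exp (-T * E n) * b n) - 1)
      =O[atTop] fun T => Real.exp (-T) := by
  have hE0 : E 0 = (d : ℝ) / 2 := by simp [hE]
  have hab : 0 < a 0 * b 0 := mul_pos ha0 hb0
  have hsq : ∀ T, (𝒩 T) ^ 2 = Real.exp (T * (d : ℝ) / 2) / (a 0 * b 0) := by
    intro T
    rw [h𝒩, hE0, mul_pow, ← Real.rpow_natCast, ← Real.rpow_mul hab.le, ← Real.exp_nat_mul]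
    have e1 : (-(1 : ℝ) / 2) * ((2 : ℕ) : ℝ) = -1 := by norm_num
    have e2 : ((2 : ℕ) : ℝ) * (T * ((d : ℝ) / 2) / 2) = T * d / 2 := by push_cast; ring
    rw [e1, e2, Real.rpow_neg_one]
    field_simp
  have hpos : ∀ T, 0 < 𝒩 T := by
    intro T
    rw [h𝒩]
    positivity
  have hone : ∀ T, (𝒩 T) ^ 2 * (a 0 * Real.exp (-T * E 0) * b 0) = 1 := by
    intro T
    have e : Real.exp (T * (d : ℝ) / 2) * Real.exp (-T * ((d : ℝ) / 2)) = 1 := by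
      rw [← Real.exp_add, ← Real.exp_zero]
      congr 1
      ring
    rw [hsq, hE0]
    calc _ = (Real.exp (T * (d : ℝ) / 2) * Real.exp (-T * ((d : ℝ) / 2))) *
          ((a 0 * b 0) / (a 0 * b 0)) := by ring
      _ = 1 := by rw [e, div_self hab.ne', one_mul]
  have hexp : ∀ T n, Real.exp (-T * E n) =
      Real.exp (-T * (d / 2)) * ∏ j, Real.exp (-T) ^ (n j) := by
    intro T n
    simp_rw [← Real.exp_nat_mul]
    rw [← Real.exp_sum, ← Real.exp_add, hE]
    congr 1
    rw [← Finset.sum_mul]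
    ring
  have hg : ∀ T : ℝ, 0 < T → HasSum (fun n : Fin d → ℕ => M ^ 2 * Real.exp (-T * E n))
      (M ^ 2 * (Real.exp (-T * (d / 2)) * ((1 - Real.exp (-T))⁻¹) ^ d)) := by
    intro T hT
    simp_rw [hexp]
    exact ((aux_geom _ (Real.exp_pos _).le (by simpa using hT) d).mul_left _).mul_left _
  have hbd : ∀ T n, ‖a n * Real.exp (-T * E n) * b n‖ ≤ M ^ 2 * Real.exp (-T * E n) := by
    intro T n
    rw [norm_mul, norm_mul, Real.norm_eq_abs, Real.norm_eq_abs, Real.norm_eq_abs, Real.abs_exp]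
    have := mul_le_mul (ha n) (hb n) (abs_nonneg _) hM.le
    nlinarith [Real.exp_pos (-T * E n)]
  have hsum : ∀ T : ℝ, 0 < T → Summable (fun n : Fin d → ℕ => a n * Real.exp (-T * E n) * b n) :=
    fun T hT => Summable.of_norm_bounded (hg T hT).summable (hbd T)
  have hmain : ∀ T : ℝ, 0 < T → |(𝒩 T) ^ 2 * ∑' n : {n : Fin d → ℕ // n ≠ 0},
          a n.1 * Real.exp (-T * E n.1) * b n.1| ≤
        M ^ 2 / (a 0 * b 0) *
          ((d : ℝ) * Real.exp (-T) * (1 - Real.exp (-T)) ^ (-(d : ℤ))) := by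
    intro T hT
    have h1 := tsum_of_norm_bounded (aux_compl _ _ (hg T hT)) (fun n => hbd T n.1)
    rw [Real.norm_eq_abs, hE0] at h1
    have hr : Real.exp (-T) < 1 := by simpa using hT
    have hr0 := Real.exp_pos (-T)
    have hq : 0 < (1 - Real.exp (-T)) ^ d := pow_pos (by linarith) d
    have hB : 1 - d * Real.exp (-T) ≤ (1 - Real.exp (-T)) ^ d := by
      have := one_add_mul_le_pow (a := -Real.exp (-T)) (by linarith) d
      have e : (1 : ℝ) + -Real.exp (-T) = 1 - Real.exp (-T) := by ring
      rw [e] at this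
      linarith
    have hB2 : ((1 - Real.exp (-T)) ^ d)⁻¹ - 1 ≤
        d * Real.exp (-T) * ((1 - Real.exp (-T)) ^ d)⁻¹ := by
      have := mul_le_mul_of_nonneg_right hB (inv_pos.2 hq).le
      rw [mul_inv_cancel₀ hq.ne'] at this
      linarith
    have e : Real.exp (T * (d : ℝ) / 2) * Real.exp (-T * ((d : ℝ) / 2)) = 1 := by
      rw [← Real.exp_add, ← Real.exp_zero]
      congr 1
      ring
    rw [abs_mul, abs_of_nonneg (sq_nonneg _), hsq, zpow_neg, zpow_natCast]
    rw [inv_pow] at h1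
    refine (mul_le_mul_of_nonneg_left h1 (by positivity)).trans ?_
    calc _ = (Real.exp (T * (d : ℝ) / 2) * Real.exp (-T * ((d : ℝ) / 2))) *
          (M ^ 2 / (a 0 * b 0) * (((1 - Real.exp (-T)) ^ d)⁻¹ - 1)) := by ring
      _ ≤ _ := by
        rw [e, one_mul]
        exact mul_le_mul_of_nonneg_left hB2 (by positivity)
  refine ⟨fun T hT => ⟨hsq T, hpos T, hone T, ?_, hsum T hT, hmain T hT⟩, ?_⟩
  · intro N hN h
    have hc : a 0 * Real.exp (-T * E 0) * b 0 ≠ 0 := by positivity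
    have h2 : N ^ 2 = (𝒩 T) ^ 2 := mul_right_cancel₀ hc (h.trans (hone T).symm)
    exact (pow_left_inj₀ hN.le (hpos T).le two_ne_zero).1 h2
  · refine IsBigO.of_bound (M ^ 2 / (a 0 * b 0) * (d * ((1 - Real.exp (-1)) ^ d)⁻¹)) ?_
    filter_upwards [eventually_ge_atTop (1 : ℝ)] with T hT
    have hT0 : 0 < T := by linarith
    have h := hmain T hT0
    rw [(aux_compl _ _ (hsum T hT0).hasSum).tsum_eq, mul_sub, hone] at h
    rw [Real.norm_eq_abs, Real.norm_eq_abs, Real.abs_exp]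
    refine h.trans ?_
    have h1 : Real.exp (-1) < 1 := by simp
    have h2 : Real.exp (-T) ≤ Real.exp (-1) := Real.exp_le_exp.2 (by linarith)
    have h3 : ((1 - Real.exp (-T)) ^ d)⁻¹ ≤ ((1 - Real.exp (-1)) ^ d)⁻¹ :=
      inv_anti₀ (pow_pos (by linarith) d)
        (pow_le_pow_left₀ (by linarith) (by linarith) d)
    rw [zpow_neg, zpow_natCast]
    calc _ = M ^ 2 / (a 0 * b 0) * (d * Real.exp (-T)) * ((1 - Real.exp (-T)) ^ d)⁻¹ := by ring
      _ ≤ M ^ 2 / (a 0 * b 0) * (d * Real.exp (-T)) * ((1 - Real.exp (-1)) ^ d)⁻¹ :=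
        mul_le_mul_of_nonneg_left h3 (by positivity)
      _ = _ := by ring
end
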